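/- Let G be a finite simple loopless graph with at least one edge, let L_G be its Laplacian matrix with largest eigenvalue λ_1(L_G), and let d̄ be the average degree of the vertices of G. Then for every k ≥ 1, χ_k(G) ≥ k·λ_1(L_G)/(λ_1(L_G) − d̄). -/

import Mathlib

open Finset

/-- The `k`-th (multi)chromatic number `χ_k(G)`: the least number of colors `R`
such that each vertex can be assigned a `k`-element set of colors with
adjacent vertices receiving disjoint sets. -/
noncomputable def multiChrom {V : Type*} (k : ℕ) (G : SimpleGraph V) : ℕ :=
  sInf {R : ℕ | ∃ f : V → Finset (Fin R),
    (∀ v, (f v).card = k) ∧ ∀ u v, G.Adj u v → Disjoint (f u) (f v)}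

/-! Let `λ` be the largest Laplacian eigenvalue and `n` the number of vertices. The Laplacian
kills constants, so `xᵀ L x ≤ λ (‖x‖² - (∑ x)² / n)`: center `x`, then use the Rayleigh bound. For
the indicator of an independent set `S` the left side is the number of edges leaving `S`, that is
the sum of the degrees over `S`. Sum over the `R` color classes of a `k`-multicoloring: every vertex
lies in `k` of them, and Cauchy-Schwarz bounds the sum of their squared sizes below by `(k n)² / R`.
What results is `k λ ≤ R (λ - d̄)`. -/

open Matrix

section QuadraticForm

variable {ι : Type*} [Fintype ι]

theorem dotProduct_mulVec_sub_smul_one {R : Type*} [CommRing R] {A : Matrix ι ι R}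
    (hA : A.IsSymm) (hA_one : A *ᵥ 1 = 0) (x : ι → R) (m : R) :
    (x - m • 1) ⬝ᵥ A *ᵥ (x - m • 1) = x ⬝ᵥ A *ᵥ x := by
  have one_vecMul : 1 ᵥ* A = 0 := by rw [← mulVec_transpose, hA.eq, hA_one]
  rw [mulVec_sub, mulVec_smul, hA_one, smul_zero, sub_zero, sub_dotProduct, smul_dotProduct,
    dotProduct_mulVec 1, one_vecMul, zero_dotProduct, smul_zero, sub_zero]

theorem dotProduct_self_sub_mean_smul_one {K : Type*} [Field K] [CharZero K] (x : ι → K) :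
    (x - ((∑ i, x i) / Fintype.card ι) • 1) ⬝ᵥ (x - ((∑ i, x i) / Fintype.card ι) • 1) =
      x ⬝ᵥ x - (∑ i, x i) ^ 2 / Fintype.card ι := by
  simp only [sub_dotProduct, dotProduct_sub, smul_dotProduct, dotProduct_smul, dotProduct_one,
    one_dotProduct, Pi.sub_apply, Pi.smul_apply, Pi.one_apply, sum_sub_distrib, sum_const,
    card_univ, nsmul_eq_mul, smul_eq_mul, mul_one]
  cases isEmpty_or_nonempty ι
  · simp
  · field_simp
    ring

variable [DecidableEq ι]

open scoped ComplexOrder MatrixOrder in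
theorem posSemidef_algebraMap_sub_of_eigenvalues_le {𝕜 : Type*} [RCLike 𝕜] {A : Matrix ι ι 𝕜}
    (hA : A.IsHermitian) {l : ℝ} (hl : ∀ i, hA.eigenvalues i ≤ l) :
    (algebraMap ℝ (Matrix ι ι 𝕜) l - A).PosSemidef := by
  rw [← Matrix.le_iff]
  refine le_algebraMap_of_spectrum_le ?_ hA
  rw [hA.spectrum_real_eq_range_eigenvalues]
  exact Set.forall_mem_range.2 hl

variable {A : Matrix ι ι ℝ} {l : ℝ}

theorem dotProduct_mulVec_le_of_eigenvalues_le (hA : A.IsHermitian)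
    (hl : ∀ i, hA.eigenvalues i ≤ l) (x : ι → ℝ) : x ⬝ᵥ A *ᵥ x ≤ l * (x ⬝ᵥ x) := by
  simpa [sub_mulVec, Algebra.algebraMap_eq_smul_one, smul_mulVec] using
    (posSemidef_algebraMap_sub_of_eigenvalues_le hA hl).dotProduct_mulVec_nonneg x

theorem dotProduct_mulVec_le_mul_sub_sq_sum_div_card (hA : A.IsHermitian) (hA_one : A *ᵥ 1 = 0)
    (hl : ∀ i, hA.eigenvalues i ≤ l) (x : ι → ℝ) :
    x ⬝ᵥ A *ᵥ x ≤ l * (x ⬝ᵥ x - (∑ i, x i) ^ 2 / Fintype.card ι) := by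
  rw [← dotProduct_mulVec_sub_smul_one (isHermitian_iff_isSymm.1 hA) hA_one x
    ((∑ i, x i) / Fintype.card ι), ← dotProduct_self_sub_mean_smul_one]
  exact dotProduct_mulVec_le_of_eigenvalues_le hA hl _

end QuadraticForm

section Laplacian

variable {V : Type*} [Fintype V] [DecidableEq V] {G : SimpleGraph V} [DecidableRel G.Adj]

theorem indicator_dotProduct_lapMatrix_mulVec_indicator {R : Type*} [NonAssocRing R]
    {S : Finset V} (hS : G.IsIndepSet S) :
    (S : Set V).indicator 1 ⬝ᵥ G.lapMatrix R *ᵥ (S : Set V).indicator 1 =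
      ∑ v ∈ S, (G.degree v : R) := by
  have lap_apply : ∀ v ∈ S, (G.lapMatrix R *ᵥ (S : Set V).indicator 1) v = G.degree v := by
    intro v hv
    have no_neighbor : ∀ u ∈ G.neighborFinset v, (S : Set V).indicator (1 : V → R) u = 0 := by
      intro u hu
      have hadj : G.Adj v u := (G.mem_neighborFinset v u).1 hu
      exact Set.indicator_of_notMem (fun hu' => hS hv hu' hadj.ne hadj) 1
    rw [G.lapMatrix_mulVec_apply, sum_eq_zero no_neighbor, Set.indicator_of_mem hv]
    simp
  rw [← sum_congr rfl lap_apply]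
  simp [dotProduct, Set.indicator_apply]

theorem sum_degree_le_of_isIndepSet (hL : (G.lapMatrix ℝ).IsHermitian) {l : ℝ}
    (hl : ∀ i, hL.eigenvalues i ≤ l) {S : Finset V} (hS : G.IsIndepSet S) :
    ∑ v ∈ S, (G.degree v : ℝ) ≤ l * (#S - (#S : ℝ) ^ 2 / Fintype.card V) := by
  have bound := dotProduct_mulVec_le_mul_sub_sq_sum_div_card hL
    G.lapMatrix_mulVec_const_eq_zero hl ((S : Set V).indicator 1)
  rw [indicator_dotProduct_lapMatrix_mulVec_indicator hS] at bound
  simpa [dotProduct, Set.indicator_apply] using bound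

end Laplacian

/-- The assignment `f` of color sets is a `k`-multicoloring of `G`. The colors range over an
arbitrary type `C`; `multiChrom k G` is the least `R` for which one exists with `C = Fin R`. -/
def IsMulticoloring {V C : Type*} (G : SimpleGraph V) (k : ℕ) (f : V → Finset C) : Prop :=
  (∀ v, #(f v) = k) ∧ ∀ u v, G.Adj u v → Disjoint (f u) (f v)

/-- The vertices whose color set under `f` contains the color `c`. -/
def colorClass {V C : Type*} [Fintype V] [DecidableEq C] (f : V → Finset C) (c : C) : Finset V :=
  {v | c ∈ f v}

theorem sum_sum_colorClass {V C M : Type*} [Fintype V] [Fintype C] [DecidableEq C]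
    [AddCommMonoid M] (f : V → Finset C) (g : V → M) :
    ∑ c, ∑ v ∈ colorClass f c, g v = ∑ v, #(f v) • g v := by
  rw [sum_comm' (t' := univ) (s' := f) (by simp [colorClass])]
  simp only [sum_const]

namespace IsMulticoloring

variable {V C C' : Type*} {G : SimpleGraph V} {k : ℕ} {f : V → Finset C}

theorem map (hf : IsMulticoloring G k f) (e : C ↪ C') :
    IsMulticoloring G k fun v => (f v).map e :=
  ⟨fun v => (card_map e).trans (hf.1 v), fun u v huv => (disjoint_map e).2 (hf.2 u v huv)⟩

theorem of_coloring (c : G.Coloring C) (k : ℕ) :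
    IsMulticoloring G k fun v => ({c v} : Finset C) ×ˢ (univ : Finset (Fin k)) :=
  ⟨fun v => by simp, fun u v huv =>
    disjoint_product.2 (Or.inl (disjoint_singleton.2 (c.valid huv)))⟩

theorem exists_multiChrom {n : ℕ} (hG : G.Colorable n) (k : ℕ) :
    ∃ f : V → Finset (Fin (multiChrom k G)), IsMulticoloring G k f :=
  have ⟨c⟩ := hG
  Nat.sInf_mem (s := {R | ∃ f : V → Finset (Fin R), IsMulticoloring G k f})
    ⟨n * k, _, (of_coloring c k).map finProdFinEquiv.toEmbedding⟩

theorem le_card [Nonempty V] [Fintype C] (hf : IsMulticoloring G k f) : k ≤ Fintype.card C :=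
  hf.1 (Classical.arbitrary V) ▸ card_le_univ _

section ColorClass

variable [Fintype V] [DecidableEq C]

theorem isIndepSet_colorClass (hf : IsMulticoloring G k f) (c : C) :
    G.IsIndepSet (colorClass f c) := by
  intro u hu v hv _ huv
  simp only [colorClass, coe_filter, mem_univ, true_and, Set.mem_ofPred_eq] at hu hv
  exact disjoint_left.1 (hf.2 u v huv) hu hv

variable [Fintype C]

theorem sum_sum_colorClass_eq_nsmul {M : Type*} [AddCommMonoid M] (hf : IsMulticoloring G k f)
    (g : V → M) : ∑ c, ∑ v ∈ colorClass f c, g v = k • ∑ v, g v := by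
  simp only [sum_sum_colorClass, hf.1, sum_nsmul]

theorem sum_card_colorClass (hf : IsMulticoloring G k f) :
    ∑ c, #(colorClass f c) = k * Fintype.card V := by
  simpa using hf.sum_sum_colorClass_eq_nsmul fun _ => (1 : ℕ)

theorem sq_mul_card_le_card_mul_sum_sq_card_colorClass (hf : IsMulticoloring G k f) :
    ((k : ℝ) * Fintype.card V) ^ 2 ≤ Fintype.card C * ∑ c, (#(colorClass f c) : ℝ) ^ 2 := by
  have cauchy_schwarz := sq_sum_le_card_mul_sum_sq (s := univ)
    (f := fun c => (#(colorClass f c) : ℝ))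
  rwa [← Nat.cast_sum, hf.sum_card_colorClass, Nat.cast_mul] at cauchy_schwarz

variable [DecidableEq V] [DecidableRel G.Adj] {l : ℝ}

theorem mul_sum_degree_le (hf : IsMulticoloring G k f) (hL : (G.lapMatrix ℝ).IsHermitian)
    (hl : ∀ i, hL.eigenvalues i ≤ l) :
    k * ∑ v, (G.degree v : ℝ) ≤
      l * (k * Fintype.card V - (∑ c, (#(colorClass f c) : ℝ) ^ 2) / Fintype.card V) :=
  calc
    k * ∑ v, (G.degree v : ℝ) = ∑ c, ∑ v ∈ colorClass f c, (G.degree v : ℝ) := by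
      rw [hf.sum_sum_colorClass_eq_nsmul, nsmul_eq_mul]
    _ ≤ ∑ c, l * (#(colorClass f c) - (#(colorClass f c) : ℝ) ^ 2 / Fintype.card V) :=
      sum_le_sum fun c _ => sum_degree_le_of_isIndepSet hL hl (hf.isIndepSet_colorClass c)
    _ = l * (k * Fintype.card V - (∑ c, (#(colorClass f c) : ℝ) ^ 2) / Fintype.card V) := by
      rw [← mul_sum, sum_sub_distrib, ← sum_div, ← Nat.cast_sum, hf.sum_card_colorClass,
        Nat.cast_mul]

end ColorClass

theorem mul_le_card_mul_sub_average_degree [Fintype V] [Nonempty V] [DecidableEq V]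
    [DecidableRel G.Adj] [Fintype C] (hf : IsMulticoloring G k f) (hk : 1 ≤ k)
    (hL : (G.lapMatrix ℝ).IsHermitian) {l : ℝ} (hl : ∀ i, hL.eigenvalues i ≤ l) :
    k * l ≤ Fintype.card C * (l - (∑ v, (G.degree v : ℝ)) / Fintype.card V) := by
  classical
  have degree_bound := hf.mul_sum_degree_le hL hl
  have cauchy_schwarz := hf.sq_mul_card_le_card_mul_sum_sq_card_colorClass
  set n : ℝ := (Fintype.card V : ℝ)
  set R : ℝ := (Fintype.card C : ℝ)
  set D : ℝ := ∑ v, (G.degree v : ℝ)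
  set Q : ℝ := ∑ c, (#(colorClass f c) : ℝ) ^ 2
  have l_nonneg : 0 ≤ l :=
    ((G.posSemidef_lapMatrix ℝ).eigenvalues_nonneg (Classical.arbitrary V)).trans (hl _)
  have n_pos : 0 < n := Nat.cast_pos.2 Fintype.card_pos
  have k_pos : (0 : ℝ) < k := Nat.cast_pos.2 hk
  have scaled : R * (k * D) ≤ l * (R * (k * n) - k ^ 2 * n) :=
    calc
      R * (k * D) ≤ R * (l * (k * n - Q / n)) := by gcongr
      _ = l * (R * (k * n) - R * Q / n) := by ring
      _ ≤ l * (R * (k * n) - (k * n) ^ 2 / n) := by gcongr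
      _ = l * (R * (k * n) - k ^ 2 * n) := by field_simp
  refine le_of_mul_le_mul_left ?_ (mul_pos k_pos n_pos)
  calc
    k * n * (k * l) ≤ l * (R * (k * n)) - R * (k * D) := by linarith
    _ = k * n * (R * (l - D / n)) := by field_simp

end IsMulticoloring

theorem stmt_16 {V : Type*} [Fintype V] [DecidableEq V] (G : SimpleGraph V)
    [DecidableRel G.Adj] (hedge : G.edgeSet.Nonempty)
    (hL : (G.lapMatrix ℝ).IsHermitian) (lam1 : ℝ)
    (hlam1 : IsGreatest (Set.range hL.eigenvalues) lam1)
    (k : ℕ) (hk : 1 ≤ k) :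
    (k : ℝ) * lam1 /
        (lam1 - (∑ v : V, (G.degree v : ℝ)) / (Fintype.card V : ℝ)) ≤
      (multiChrom k G : ℝ) := by
  obtain ⟨⟨i, rfl⟩, upper⟩ := hlam1
  have : Nonempty V := ⟨i⟩
  have lam_nonneg : 0 ≤ hL.eigenvalues i := (G.posSemidef_lapMatrix ℝ).eigenvalues_nonneg i
  obtain ⟨f, hf⟩ := IsMulticoloring.exists_multiChrom G.colorable_of_fintype k
  have bound := hf.mul_le_card_mul_sub_average_degree hk hL (Set.forall_mem_range.1 upper)
  have chrom_pos := hk.trans hf.le_card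
  rw [Fintype.card_fin] at bound chrom_pos
  have gap_nonneg : 0 ≤ hL.eigenvalues i - (∑ v, (G.degree v : ℝ)) / Fintype.card V :=
    nonneg_of_mul_nonneg_right ((mul_nonneg k.cast_nonneg lam_nonneg).trans bound)
      (Nat.cast_pos.2 chrom_pos)
  exact div_le_of_le_mul₀ gap_nonneg (Nat.cast_nonneg _) bound
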